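/- arXiv:2602.04417 — 9 statements merged into one kernel-verified Lean document; each statement's English description precedes it below -/
import Mathlib

section
/- Let F be an n×n real matrix, g ∈ ℝ^n, α, β ∈ ℝ, and set D := η·I − α·β·F for η ∈ ℝ. Suppose sequences (θ_t) and (δ_t) in ℝ^n satisfy θ_{t+1} = θ_t + α·g − α·β·F·δ_t and δ_{t+1} = D·δ_t + α·g for all t. Then for all t, k ∈ ℕ, θ_{t+k} = θ_t + α·k·g − α·β·F·S_k·δ_t − α²·β·F·M_k·g, where S_k := ∑_{j=0}^{k−1} D^j and M_k := ∑_{j=0}^{k−1} S_j. -/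
open Matrix Finset

/-- With `D = η•I − (α·β)•F`, if `θ_{t+1} = θ_t + α·g − α·β·F·δ_t` and
`δ_{t+1} = D·δ_t + α·g`, then for all `t, k`,
`θ_{t+k} = θ_t + α·k·g − α·β·F·S_k·δ_t − α²·β·F·M_k·g`,
where `S_k = ∑_{j<k} D^j` and `M_k = ∑_{j<k} S_j`. -/
theorem ema_pg_theta_unrolled
    (n : ℕ) (F : Matrix (Fin n) (Fin n) ℝ) (g : Fin n → ℝ) (α β η : ℝ)
    (D : Matrix (Fin n) (Fin n) ℝ)
    (hD : D = η • (1 : Matrix (Fin n) (Fin n) ℝ) - (α * β) • F)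
    (θ δ : ℕ → Fin n → ℝ)
    (hθ : ∀ t : ℕ, θ (t + 1) = θ t + α • g - (α * β) • F.mulVec (δ t))
    (hδ : ∀ t : ℕ, δ (t + 1) = D.mulVec (δ t) + α • g)
    (S M : ℕ → Matrix (Fin n) (Fin n) ℝ)
    (hS : ∀ k : ℕ, S k = ∑ j ∈ Finset.range k, D ^ j)
    (hM : ∀ k : ℕ, M k = ∑ j ∈ Finset.range k, S j) :
    ∀ t k : ℕ,
      θ (t + k) = θ t + (α * (k : ℝ)) • g
        - (α * β) • F.mulVec ((S k).mulVec (δ t))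
        - (α ^ 2 * β) • F.mulVec ((M k).mulVec g) := by
  have hS1 : ∀ k, S (k + 1) = D * S k + 1 := by
    intro k
    rw [hS, hS, Finset.sum_range_succ', Finset.mul_sum]
    simp [pow_succ']
  have hS2 : ∀ k, S (k + 1) = S k + D ^ k := by
    intro k
    rw [hS, hS, Finset.sum_range_succ]
  have hM1 : ∀ k, M (k + 1) = M k + S k := by
    intro k
    rw [hM, hM, Finset.sum_range_succ]
  have hd : ∀ t k, δ (t + k) = (D ^ k).mulVec (δ t) + α • (S k).mulVec g := by
    intro t k
    induction k with
    | zero => simp [hS]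
    | succ k ih =>
      rw [← add_assoc, hδ, ih, hS1, pow_succ']
      simp only [Matrix.mulVec_add, Matrix.mulVec_smul, Matrix.add_mulVec,
        Matrix.one_mulVec, Matrix.mulVec_mulVec]
      module
  intro t k
  induction k with
  | zero => simp [hS, hM]
  | succ k ih =>
    rw [← add_assoc, hθ, ih, hd, hS2, hM1]
    simp only [Matrix.mulVec_add, Matrix.mulVec_smul, Matrix.add_mulVec]
    push_cast
    module
end

section
/- Let F be an n×n real matrix, v ∈ ℝ^n an eigenvector of F with eigenvalue λ (F·v = λ·v), and let D := η·I − α·β·F, χ := η − α·β·λ with χ ≠ 1. Suppose (δ_t) in ℝ^n satisfies δ_{t+1} = D·δ_t + α·g. Then for all t, k ∈ ℕ, the projection δ_{t+k}^{(v)} := ⟨v, δ_{t+k}⟩ satisfies δ_{t+k}^{(v)} = χ^k·⟨v, δ_t⟩ + α·((1 − χ^k)/(1 − χ))·⟨v, g⟩, where ⟨·,·⟩ is the Euclidean inner product. -/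
open Matrix Finset

/-- Let `F` be symmetric with eigenvector `v` (`F·v = λ·v`),
`D = η•I − (α·β)•F`, `χ = η − α·β·λ ≠ 1`, and suppose `δ_{t+1} = D·δ_t + α·g`.
Then the projections `⟨v, δ_{t+k}⟩` satisfy
`⟨v, δ_{t+k}⟩ = χ^k·⟨v, δ_t⟩ + α·((1 − χ^k)/(1 − χ))·⟨v, g⟩`. -/
theorem ema_pg_modewise_dynamics
    (n : ℕ) (F : Matrix (Fin n) (Fin n) ℝ) (hF : F.IsSymm)
    (v g : Fin n → ℝ) (lam : ℝ) (hv : F.mulVec v = lam • v)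
    (η α β : ℝ)
    (D : Matrix (Fin n) (Fin n) ℝ)
    (hD : D = η • (1 : Matrix (Fin n) (Fin n) ℝ) - (α * β) • F)
    (χ : ℝ) (hχ : χ = η - α * β * lam) (hχ1 : χ ≠ 1)
    (δ : ℕ → Fin n → ℝ)
    (hrec : ∀ t : ℕ, δ (t + 1) = D.mulVec (δ t) + α • g) :
    ∀ t k : ℕ,
      v ⬝ᵥ δ (t + k)
        = χ ^ k * (v ⬝ᵥ δ t) + α * ((1 - χ ^ k) / (1 - χ)) * (v ⬝ᵥ g) := by
  have hFv : ∀ w : Fin n → ℝ, v ⬝ᵥ F.mulVec w = lam * (v ⬝ᵥ w) := by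
    intro w
    rw [dotProduct_mulVec, ← mulVec_transpose, hF.eq, hv, smul_dotProduct, smul_eq_mul]
  have hstep : ∀ t, v ⬝ᵥ δ (t + 1) = χ * (v ⬝ᵥ δ t) + α * (v ⬝ᵥ g) := by
    intro t
    rw [hrec, hD, hχ, dotProduct_add, sub_mulVec, smul_mulVec, smul_mulVec, one_mulVec,
      dotProduct_sub, dotProduct_smul, dotProduct_smul, dotProduct_smul, hFv]
    simp only [smul_eq_mul]
    ring
  have h1 : 1 - χ ≠ 0 := sub_ne_zero.mpr (Ne.symm hχ1)
  intro t k
  induction k with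
  | zero => simp
  | succ k ih =>
    rw [← add_assoc, hstep, ih]
    field_simp
    ring
end

section
/- Let F be an n×n real symmetric positive semidefinite matrix with largest eigenvalue λ_max, η ∈ [0,1), α, β ≥ 0 with α·β·λ_max < 1 + η, and g ∈ ℝ^n. If (δ_t) in ℝ^n satisfies δ_{t+1} = (η·I − α·β·F)·δ_t + α·g for all t, then δ_t converges as t → ∞ to the steady-state lag δ_* := α·((1 − η)·I + α·β·F)^{−1}·g; in particular (1 − η)·I + α·β·F is invertible. -/
open Matrix Finset

/-- Let `F` be symmetric PSD with largest eigenvalue `λ_max`,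
`η ∈ [0,1)`, `α, β ≥ 0` with `α·β·λ_max < 1 + η`, and `g ∈ ℝⁿ`. If
`δ_{t+1} = (η•I − α·β·F)·δ_t + α·g`, then `δ_t` converges as `t → ∞` to the
steady-state lag `δ_* = α·((1 − η)•I + α·β·F)⁻¹·g`; in particular
`(1 − η)•I + α·β·F` is invertible. -/
theorem ema_pg_steady_state_convergence
    (n : ℕ) (F : Matrix (Fin n) (Fin n) ℝ) (hF : F.PosSemidef)
    (lamMax : ℝ)
    (hmax : IsGreatest {μ : ℝ | ∃ v : Fin n → ℝ, v ≠ 0 ∧ F.mulVec v = μ • v} lamMax)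
    (η α β : ℝ) (hη0 : 0 ≤ η) (hη1 : η < 1) (hα : 0 ≤ α) (hβ : 0 ≤ β)
    (hstab : α * β * lamMax < 1 + η)
    (g : Fin n → ℝ) (δ : ℕ → Fin n → ℝ)
    (hrec : ∀ t : ℕ,
      δ (t + 1)
        = (η • (1 : Matrix (Fin n) (Fin n) ℝ) - (α * β) • F).mulVec (δ t) + α • g) :
    IsUnit ((1 - η) • (1 : Matrix (Fin n) (Fin n) ℝ) + (α * β) • F) ∧
      Filter.Tendsto δ Filter.atTop
        (nhds (α •
          (((1 - η) • (1 : Matrix (Fin n) (Fin n) ℝ) + (α * β) • F)⁻¹).mulVec g)) := by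
  have hab : 0 ≤ α * β := mul_nonneg hα hβ
  have hU : IsUnit ((1 - η) • (1 : Matrix (Fin n) (Fin n) ℝ) + (α * β) • F) := by
    have h1 : ((1 - η) • (1 : Matrix (Fin n) (Fin n) ℝ)).PosDef :=
      Matrix.PosDef.one.smul (by linarith)
    exact (h1.add_posSemidef (hF.smul hab)).isUnit
  refine ⟨hU, ?_⟩
  set M := (1 - η) • (1 : Matrix (Fin n) (Fin n) ℝ) + (α * β) • F with hM
  set d := α • (M⁻¹).mulVec g with hd
  have hMd : M.mulVec d = α • g := by
    rw [hd, Matrix.mulVec_smul, Matrix.mulVec_mulVec,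
      Matrix.mul_nonsing_inv _ ((Matrix.isUnit_iff_isUnit_det _).1 hU), Matrix.one_mulVec]
  have hMd' : (1 - η) • d + (α * β) • F.mulVec d = α • g := by
    rw [← hMd, hM, Matrix.add_mulVec, Matrix.smul_mulVec, Matrix.smul_mulVec, Matrix.one_mulVec]
  have he : ∀ t, δ (t + 1) - d = η • (δ t - d) - (α * β) • F.mulVec (δ t - d) := by
    intro t
    rw [hrec, ← hMd', Matrix.sub_mulVec, Matrix.smul_mulVec, Matrix.smul_mulVec,
      Matrix.one_mulVec, Matrix.mulVec_sub]
    module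
  have hH := hF.1
  let u : Fin n → Fin n → ℝ := fun i => (hH.eigenvectorBasis i).ofLp
  have hu : ∀ i, F.mulVec (u i) = hH.eigenvalues i • u i := fun i => hH.mulVec_eigenvectorBasis i
  have hu0 : ∀ i, u i ≠ 0 := by
    intro i h
    apply hH.eigenvectorBasis.orthonormal.ne_zero i
    ext j
    exact congrFun h j
  have hl0 : ∀ i, 0 ≤ hH.eigenvalues i := fun i => hF.eigenvalues_nonneg i
  have hl1 : ∀ i, hH.eigenvalues i ≤ lamMax := fun i => hmax.2 ⟨u i, hu0 i, hu i⟩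
  have hFT : Fᵀ = F := by simpa using hH.eq
  have hc : ∀ i t, u i ⬝ᵥ (δ t - d) =
      (η - α * β * hH.eigenvalues i) ^ t * (u i ⬝ᵥ (δ 0 - d)) := by
    intro i t
    induction t with
    | zero => simp
    | succ t ih =>
      have hs : u i ⬝ᵥ F.mulVec (δ t - d) = hH.eigenvalues i * (u i ⬝ᵥ (δ t - d)) := by
        rw [Matrix.dotProduct_mulVec, ← Matrix.mulVec_transpose, hFT, hu, smul_dotProduct,
          smul_eq_mul]
      rw [he, dotProduct_sub, dotProduct_smul, dotProduct_smul, hs, ih, pow_succ]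
      simp only [smul_eq_mul]
      ring
  have hlim : ∀ i, Filter.Tendsto (fun t => u i ⬝ᵥ (δ t - d)) Filter.atTop (nhds 0) := by
    intro i
    have h1 := mul_nonneg hab (hl0 i)
    have h2 := mul_le_mul_of_nonneg_left (hl1 i) hab
    have h := (tendsto_pow_atTop_nhds_zero_of_abs_lt_one
      (r := η - α * β * hH.eigenvalues i)
      (abs_lt.2 ⟨by linarith, by linarith⟩)).mul_const (u i ⬝ᵥ (δ 0 - d))
    rw [zero_mul] at h
    exact h.congr fun t => (hc i t).symm
  have hsum : ∀ v : Fin n → ℝ, v = ∑ i, (u i ⬝ᵥ v) • u i := by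
    intro v
    have h := congrArg WithLp.ofLp (hH.eigenvectorBasis.sum_repr' (WithLp.toLp 2 v))
    rw [WithLp.ofLp_sum] at h
    simp only [WithLp.ofLp_smul, EuclideanSpace.inner_eq_star_dotProduct, star_trivial] at h
    conv_lhs => rw [← h]
    exact Finset.sum_congr rfl fun i _ => by rw [dotProduct_comm]
  have hz : Filter.Tendsto (fun t => δ t - d) Filter.atTop (nhds 0) := by
    have h : Filter.Tendsto (fun t => ∑ i, (u i ⬝ᵥ (δ t - d)) • u i) Filter.atTop
        (nhds (∑ i, (0 : ℝ) • u i)) :=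
      tendsto_finsetSum _ fun i _ => (hlim i).smul_const (u i)
    simp only [zero_smul, Finset.sum_const_zero] at h
    exact h.congr fun t => (hsum _).symm
  simpa using hz.add_const d
end

section
/- Let V be a nonempty finite type, and let π : ℝ^d → V → ℝ be a parameterized policy such that for all θ and j, π θ j > 0, ∑_j π θ j = 1, and θ ↦ π θ j is differentiable at θ₀. Let q : V → ℝ satisfy q j > 0 and ∑_j q j = 1. Then the Fréchet derivative at θ₀ of the reverse KL divergence θ ↦ ∑_{j∈V} π θ j · log(π θ j / q j) equals ∑_{j∈V} π θ₀ j · log(π θ₀ j / q j) · D_θ(log(π θ j))|_{θ₀}, where D_θ(log(π θ j))|_{θ₀} denotes the Fréchet derivative at θ₀ of θ ↦ log(π θ j). -/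
open Finset

/-- For a parameterized policy `π : ℝ^d → V → ℝ` (positive, summing
to one, differentiable at `θ₀`) and a strictly positive reference pmf `q`, the Fréchet
derivative at `θ₀` of the reverse KL `θ ↦ ∑_j π θ j · log(π θ j / q j)` equals
`∑_j π θ₀ j · log(π θ₀ j / q j) · D_θ(log π θ j)|_{θ₀}`. -/
theorem reverse_kl_gradient
    {V : Type*} [Fintype V] [Nonempty V] (d : ℕ)
    (π : (Fin d → ℝ) → V → ℝ) (θ₀ : Fin d → ℝ)
    (hπpos : ∀ θ j, 0 < π θ j) (hπsum : ∀ θ, ∑ j, π θ j = 1)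
    (hπdiff : ∀ j, DifferentiableAt ℝ (fun θ => π θ j) θ₀)
    (q : V → ℝ) (hqpos : ∀ j, 0 < q j) (hqsum : ∑ j, q j = 1) :
    fderiv ℝ (fun θ => ∑ j, π θ j * Real.log (π θ j / q j)) θ₀
      = ∑ j, (π θ₀ j * Real.log (π θ₀ j / q j)) •
          fderiv ℝ (fun θ => Real.log (π θ j)) θ₀ := by
  have hlog : ∀ j, HasFDerivAt (fun θ => Real.log (π θ j))
      ((π θ₀ j)⁻¹ • fderiv ℝ (fun θ => π θ j) θ₀) θ₀ := fun j =>
    (hπdiff j).hasFDerivAt.log (hπpos θ₀ j).ne'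
  have hzero : ∑ j, fderiv ℝ (fun θ => π θ j) θ₀ = 0 := by
    have h1 : HasFDerivAt (fun θ => ∑ j, π θ j) (∑ j, fderiv ℝ (fun θ => π θ j) θ₀) θ₀ :=
      HasFDerivAt.fun_sum fun j _ => (hπdiff j).hasFDerivAt
    have h2 : (fun θ => ∑ j, π θ j) = fun _ => (1 : ℝ) := funext hπsum
    rw [h2] at h1
    exact h1.unique (hasFDerivAt_const (1 : ℝ) θ₀)
  have hfun : (fun θ => ∑ j, π θ j * Real.log (π θ j / q j))
      = fun θ => ∑ j, π θ j * (Real.log (π θ j) - Real.log (q j)) := by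
    funext θ
    refine Finset.sum_congr rfl fun j _ => ?_
    rw [Real.log_div (hπpos θ j).ne' (hqpos j).ne']
  have hmain : HasFDerivAt (fun θ => ∑ j, π θ j * (Real.log (π θ j) - Real.log (q j)))
      (∑ j, (π θ₀ j • ((π θ₀ j)⁻¹ • fderiv ℝ (fun θ => π θ j) θ₀)
        + (Real.log (π θ₀ j) - Real.log (q j)) • fderiv ℝ (fun θ => π θ j) θ₀)) θ₀ :=
    HasFDerivAt.fun_sum fun j _ =>
      (hπdiff j).hasFDerivAt.mul ((hlog j).sub_const (Real.log (q j)))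
  rw [hfun, hmain.fderiv, Finset.sum_add_distrib]
  have h3 : ∑ j, π θ₀ j • ((π θ₀ j)⁻¹ • fderiv ℝ (fun θ => π θ j) θ₀) = 0 := by
    rw [← hzero]
    refine Finset.sum_congr rfl fun j _ => ?_
    rw [smul_smul, mul_inv_cancel₀ (hπpos θ₀ j).ne', one_smul]
  rw [h3, zero_add]
  refine Finset.sum_congr rfl fun j _ => ?_
  rw [(hlog j).fderiv, smul_smul, Real.log_div (hπpos θ₀ j).ne' (hqpos j).ne']
  congr 1
  have := (hπpos θ₀ j).ne'
  field_simp
end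

section
/- Let V be a nonempty finite type, π : ℝ^d → V → ℝ a parameterized policy (π θ j > 0, ∑_j π θ j = 1, each θ ↦ π θ j differentiable at θ₀), and f : ℝ^d → V → ℝ with each θ ↦ f θ j differentiable at θ₀. Then the Fréchet derivative at θ₀ of θ ↦ ∑_{j∈V} π θ j · f θ j equals ∑_{j∈V} π θ₀ j · f θ₀ j · D_θ(log(π θ j))|_{θ₀} + ∑_{j∈V} π θ₀ j · D_θ(f θ j)|_{θ₀}. -/
open Finset

/-- For a parameterized policy `π` (positive, summing to one,
differentiable at `θ₀`) and `f : ℝ^d → V → ℝ` with each `θ ↦ f θ j` differentiable at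
`θ₀`, the Fréchet derivative at `θ₀` of `θ ↦ ∑_j π θ j · f θ j` equals
`∑_j π θ₀ j · f θ₀ j · D_θ(log π θ j)|_{θ₀} + ∑_j π θ₀ j · D_θ(f θ j)|_{θ₀}`. -/
theorem expectation_gradient_product_rule
    {V : Type*} [Fintype V] [Nonempty V] (d : ℕ)
    (π : (Fin d → ℝ) → V → ℝ) (θ₀ : Fin d → ℝ)
    (hπpos : ∀ θ j, 0 < π θ j) (hπsum : ∀ θ, ∑ j, π θ j = 1)
    (hπdiff : ∀ j, DifferentiableAt ℝ (fun θ => π θ j) θ₀)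
    (f : (Fin d → ℝ) → V → ℝ)
    (hfdiff : ∀ j, DifferentiableAt ℝ (fun θ => f θ j) θ₀) :
    fderiv ℝ (fun θ => ∑ j, π θ j * f θ j) θ₀
      = (∑ j, (π θ₀ j * f θ₀ j) • fderiv ℝ (fun θ => Real.log (π θ j)) θ₀)
        + ∑ j, (π θ₀ j) • fderiv ℝ (fun θ => f θ j) θ₀ := by
  rw [← Finset.sum_add_distrib]
  refine (HasFDerivAt.fun_sum fun j _ => ?_).fderiv
  have hne : π θ₀ j ≠ 0 := (hπpos θ₀ j).ne'
  have hlog : fderiv ℝ (fun θ => Real.log (π θ j)) θ₀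
      = (π θ₀ j)⁻¹ • fderiv ℝ (fun θ => π θ j) θ₀ :=
    ((hπdiff j).hasFDerivAt.log hne).fderiv
  have h := (hπdiff j).hasFDerivAt.mul (hfdiff j).hasFDerivAt
  rw [hlog, smul_smul, show π θ₀ j * f θ₀ j * (π θ₀ j)⁻¹ = f θ₀ j by field_simp, add_comm]
  exact h
end

section
/- Let V be a nonempty finite type, π : ℝ^d → V → ℝ a parameterized policy (π θ j > 0, ∑_j π θ j = 1, each θ ↦ π θ j differentiable at θ₀), q : V → ℝ with q j > 0 and ∑_j q j = 1, and f : ℝ → ℝ differentiable on (0, ∞). Write t_j(θ) := π θ j / q j. Then the Fréchet derivative at θ₀ of the f-divergence θ ↦ ∑_{j∈V} q j · f(t_j(θ)) equals ∑_{j∈V} π θ₀ j · f′(t_j(θ₀)) · D_θ(log(π θ j))|_{θ₀}. -/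
open Finset

/-- For a parameterized policy `π` (positive, summing to one,
differentiable at `θ₀`), a strictly positive reference pmf `q`, and `f : ℝ → ℝ`
differentiable on `(0, ∞)` with derivative `f'`, writing `t_j(θ) = π θ j / q j`, the
Fréchet derivative at `θ₀` of the `f`-divergence `θ ↦ ∑_j q j · f(t_j(θ))` equals
`∑_j π θ₀ j · f'(t_j(θ₀)) · D_θ(log π θ j)|_{θ₀}`. -/
theorem f_divergence_gradient
    {V : Type*} [Fintype V] [Nonempty V] (d : ℕ)
    (π : (Fin d → ℝ) → V → ℝ) (θ₀ : Fin d → ℝ)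
    (hπpos : ∀ θ j, 0 < π θ j) (hπsum : ∀ θ, ∑ j, π θ j = 1)
    (hπdiff : ∀ j, DifferentiableAt ℝ (fun θ => π θ j) θ₀)
    (q : V → ℝ) (hqpos : ∀ j, 0 < q j) (hqsum : ∑ j, q j = 1)
    (f f' : ℝ → ℝ) (hf : ∀ x : ℝ, 0 < x → HasDerivAt f (f' x) x) :
    fderiv ℝ (fun θ => ∑ j, q j * f (π θ j / q j)) θ₀
      = ∑ j, (π θ₀ j * f' (π θ₀ j / q j)) •
          fderiv ℝ (fun θ => Real.log (π θ j)) θ₀ := by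
  apply HasFDerivAt.fderiv
  apply HasFDerivAt.fun_sum
  intro j _
  have hp := (hπdiff j).hasFDerivAt
  have hq : q j ≠ 0 := (hqpos j).ne'
  have hπ : π θ₀ j ≠ 0 := (hπpos θ₀ j).ne'
  rw [(hp.log hπ).fderiv]
  have h2 : HasDerivAt (fun x => q j * f (x / q j))
      (q j * (f' (π θ₀ j / q j) * (1 / q j))) (π θ₀ j) :=
    (HasDerivAt.comp (h := fun x => x / q j) (π θ₀ j)
      (hf (π θ₀ j / q j) (div_pos (hπpos θ₀ j) (hqpos j)))
      ((hasDerivAt_id (π θ₀ j)).div_const (q j))).const_mul (q j)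
  have h3 := h2.comp_hasFDerivAt θ₀ hp
  refine h3.congr_fderiv ?_
  rw [smul_smul]
  congr 1
  field_simp
end

section
/- Let V be a nonempty finite type, π : ℝ^d → V → ℝ a parameterized policy (π θ j > 0, ∑_j π θ j = 1, each θ ↦ π θ j differentiable at θ₀), q : V → ℝ with q j > 0 and ∑_j q j = 1, f : ℝ → ℝ differentiable on (0, ∞), and S an arbitrary subset (Finset) of V. Write t_j(θ) := π θ j / q j. Then the Fréchet derivative at θ₀ of the f-divergence θ ↦ ∑_{j∈V} q j · f(t_j(θ)) equals the Fréchet derivative at θ₀ of the truncated term θ ↦ ∑_{j∈S} q j · f(t_j(θ)), plus the tail term ∑_{j∉S} π θ₀ j · f′(t_j(θ₀)) · D_θ(log(π θ j))|_{θ₀}. -/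
open Finset

/-- For a parameterized policy `π` (positive, summing to one,
differentiable at `θ₀`), a strictly positive reference pmf `q`, `f : ℝ → ℝ`
differentiable on `(0, ∞)` with derivative `f'`, and an arbitrary `Finset S ⊆ V`,
writing `t_j(θ) = π θ j / q j`, the Fréchet derivative at `θ₀` of the `f`-divergence
`θ ↦ ∑_{j∈V} q j · f(t_j(θ))` equals the Fréchet derivative at `θ₀` of the truncated
term `θ ↦ ∑_{j∈S} q j · f(t_j(θ))` plus the tail term
`∑_{j∉S} π θ₀ j · f'(t_j(θ₀)) · D_θ(log π θ j)|_{θ₀}`. -/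
theorem topk_f_divergence_gradient_decomposition
    {V : Type*} [Fintype V] [Nonempty V] [DecidableEq V] (d : ℕ)
    (π : (Fin d → ℝ) → V → ℝ) (θ₀ : Fin d → ℝ)
    (hπpos : ∀ θ j, 0 < π θ j) (hπsum : ∀ θ, ∑ j, π θ j = 1)
    (hπdiff : ∀ j, DifferentiableAt ℝ (fun θ => π θ j) θ₀)
    (q : V → ℝ) (hqpos : ∀ j, 0 < q j) (hqsum : ∑ j, q j = 1)
    (f f' : ℝ → ℝ) (hf : ∀ x : ℝ, 0 < x → HasDerivAt f (f' x) x)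
    (S : Finset V) :
    fderiv ℝ (fun θ => ∑ j, q j * f (π θ j / q j)) θ₀
      = fderiv ℝ (fun θ => ∑ j ∈ S, q j * f (π θ j / q j)) θ₀
        + ∑ j ∈ Sᶜ, (π θ₀ j * f' (π θ₀ j / q j)) •
            fderiv ℝ (fun θ => Real.log (π θ j)) θ₀ := by
  have key : ∀ j, HasFDerivAt (fun θ => q j * f (π θ j / q j))
      (f' (π θ₀ j / q j) • fderiv ℝ (fun θ => π θ j) θ₀) θ₀ := by
    intro j
    have h1 : HasDerivAt (fun x : ℝ => q j * f (x / q j)) (f' (π θ₀ j / q j)) (π θ₀ j) := by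
      have h2 := (hf (π θ₀ j / q j) (div_pos (hπpos θ₀ j) (hqpos j))).comp (π θ₀ j)
        ((hasDerivAt_id (π θ₀ j)).div_const (q j))
      have h3 := h2.const_mul (q j)
      have h4 : q j * (f' (π θ₀ j / q j) * (1 / q j)) = f' (π θ₀ j / q j) := by
        rw [mul_left_comm, mul_one_div_cancel (hqpos j).ne', mul_one]
      rw [h4] at h3
      exact h3
    have h5 := HasDerivAt.comp_hasFDerivAt (f := fun θ => π θ j) θ₀ h1 (hπdiff j).hasFDerivAt
    exact h5
  have hlog : ∀ j, fderiv ℝ (fun θ => Real.log (π θ j)) θ₀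
      = (π θ₀ j)⁻¹ • fderiv ℝ (fun θ => π θ j) θ₀ := fun j =>
    ((hπdiff j).hasFDerivAt.log (hπpos θ₀ j).ne').fderiv
  rw [(HasFDerivAt.fun_sum fun j _ => key j).fderiv,
    (HasFDerivAt.fun_sum fun j _ => key j).fderiv, ← Finset.sum_add_sum_compl S]
  congr 1
  refine Finset.sum_congr rfl fun j _ => ?_
  rw [hlog, smul_smul]
  congr 1
  have := (hπpos θ₀ j).ne'
  field_simp
end

section
/- Let Y be a nonempty finite type, π_ref : Y → ℝ with π_ref y > 0 and ∑_y π_ref y = 1, R : Y → ℝ, and β > 0. Suppose Z* ∈ ℝ satisfies Z* > max_y R y and the normalization condition ∑_y π_ref y / (Z* − R y) = 1/β. Define π_f*(y) := β · π_ref y / (Z* − R y). Then π_f* is a strictly positive probability mass function, and for every π : Y → ℝ with π y > 0 for all y and ∑_y π y = 1, the forward-KL-regularized objective J_f(π) := ∑_y π y · R y + β · ∑_y π_ref y · log(π y) satisfies J_f(π) ≤ J_f(π_f*), with equality if and only if π = π_f*. -/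
open Finset

/-- For a strictly positive reference pmf `π_ref` on a nonempty
finite type `Y`, a reward `R`, and `β > 0`, suppose `Z*` satisfies `Z* > max_y R y`
and `∑_y π_ref y / (Z* − R y) = 1/β`. Define `π_f*(y) = β · π_ref y / (Z* − R y)`.
Then `π_f*` is a strictly positive pmf, and for every strictly positive pmf `π`, the
forward-KL-regularized objective `J_f(π) = ∑_y π y · R y + β · ∑_y π_ref y · log(π y)`
satisfies `J_f(π) ≤ J_f(π_f*)`, with equality iff `π = π_f*`. -/
theorem optimal_policy_forward_kl
    {Y : Type*} [Fintype Y] [Nonempty Y]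
    (πref : Y → ℝ) (hrefpos : ∀ y, 0 < πref y) (hrefsum : ∑ y, πref y = 1)
    (R : Y → ℝ) (β : ℝ) (hβ : 0 < β)
    (Zstar : ℝ) (hZgt : ∀ y, R y < Zstar)
    (hZnorm : ∑ y, πref y / (Zstar - R y) = 1 / β)
    (πf : Y → ℝ) (hπf : ∀ y, πf y = β * πref y / (Zstar - R y))
    (Jf : (Y → ℝ) → ℝ)
    (hJf : ∀ p : Y → ℝ,
      Jf p = ∑ y, p y * R y + β * ∑ y, πref y * Real.log (p y)) :
    (∀ y, 0 < πf y) ∧ (∑ y, πf y = 1) ∧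
      ∀ p : Y → ℝ, (∀ y, 0 < p y) → (∑ y, p y = 1) →
        Jf p ≤ Jf πf ∧ (Jf p = Jf πf ↔ p = πf) := by
  have hpos : ∀ y, 0 < πf y := fun y => by
    rw [hπf]
    exact div_pos (mul_pos hβ (hrefpos y)) (sub_pos.mpr (hZgt y))
  have hsum : ∑ y, πf y = 1 := by
    simp_rw [hπf, mul_div_assoc]
    rw [← Finset.mul_sum, hZnorm]
    field_simp
  refine ⟨hpos, hsum, ?_⟩
  intro p hp hps
  -- pointwise gap
  have hc : ∀ y, β * πref y = πf y * (Zstar - R y) := fun y => by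
    rw [hπf, div_mul_cancel₀ _ (sub_pos.mpr (hZgt y)).ne']
  have hform : ∀ y, (p y - πf y) * (Zstar - R y)
        - β * πref y * (Real.log (p y) - Real.log (πf y))
      = β * πref y * (p y / πf y - 1 - Real.log (p y / πf y)) := fun y => by
    rw [Real.log_div (hp y).ne' (hpos y).ne', hc]
    have := (hpos y).ne'
    field_simp
  have hD : Jf πf - Jf p
      = ∑ y, β * πref y * (p y / πf y - 1 - Real.log (p y / πf y)) := by
    simp_rw [← hform]
    have e : ∀ y, (p y - πf y) * (Zstar - R y)
        - β * πref y * (Real.log (p y) - Real.log (πf y))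
        = Zstar * p y - Zstar * πf y - p y * R y + πf y * R y
          - β * (πref y * Real.log (p y)) + β * (πref y * Real.log (πf y)) :=
      fun y => by ring
    simp_rw [e, Finset.sum_add_distrib, Finset.sum_sub_distrib, Finset.sum_add_distrib,
      Finset.sum_sub_distrib, ← Finset.mul_sum, hps, hsum, hJf]
    ring
  have hnn : ∀ y ∈ Finset.univ,
      0 ≤ β * πref y * (p y / πf y - 1 - Real.log (p y / πf y)) := fun y _ =>
    mul_nonneg (mul_pos hβ (hrefpos y)).le
      (sub_nonneg.mpr (Real.log_le_sub_one_of_pos (div_pos (hp y) (hpos y))))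
  refine ⟨by linarith [Finset.sum_nonneg hnn], fun h => ?_, fun h => by rw [h]⟩
  have h0 := (Finset.sum_eq_zero_iff_of_nonneg hnn).mp (by rw [← hD, h, sub_self])
  funext y
  by_contra hne
  have hq : p y / πf y ≠ 1 := fun h1 => hne ((div_eq_one_iff_eq (hpos y).ne').mp h1)
  have hlt := Real.log_lt_sub_one_of_pos (div_pos (hp y) (hpos y)) hq
  have := mul_pos (mul_pos hβ (hrefpos y)) (sub_pos.mpr hlt)
  exact this.ne' (h0 y (Finset.mem_univ y))
end

section
/- Let Y be a nonempty finite type, π : ℝ^d → Y → ℝ a parameterized policy (π θ y > 0, ∑_y π θ y = 1, each θ ↦ π θ y differentiable at θ₀), and π_ref : Y → ℝ with π_ref y > 0 and ∑_y π_ref y = 1. Fix N ≥ 1 and let the expectation be over N i.i.d. samples (y₁, …, y_N) drawn from π θ₀ (i.e. a sum over tuples in Y^N weighted by ∏_{j=1}^N π θ₀ y_j). Then E_{(y₁,…,y_N)} [ ∑_{j=1}^N D_θ(log(π θ y_j))|_{θ₀} · (1/N) · ∑_{i=1}^N log(π θ₀ y_i / π_ref y_i) ] = D_θ( ∑_{y∈Y}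 π θ y · log(π θ y / π_ref y) )|_{θ₀}, i.e. the group-based regularizer gradient equals the exact reverse KL gradient. -/
open Finset

lemma iid_pair_expectation {Y : Type*} [Fintype Y] (N : ℕ) (p a b : Y → ℝ)
    (hp : ∑ y, p y = 1) (ha : ∑ y, p y * a y = 0) (i j : Fin N) :
    ∑ ys : Fin N → Y, (∏ k, p (ys k)) * (b (ys i) * a (ys j))
      = if i = j then ∑ y, p y * (b y * a y) else 0 := by
  classical
  have key : ∀ ys : Fin N → Y, (∏ k, p (ys k)) * (b (ys i) * a (ys j))
      = ∏ k, (p (ys k) * ((if k = i then b (ys k) else 1) * (if k = j then a (ys k) else 1))) := by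
    intro ys
    rw [Finset.prod_mul_distrib, Finset.prod_mul_distrib]
    simp
  have h := Finset.prod_univ_sum (fun _ : Fin N => (Finset.univ : Finset Y))
    (fun k y => p y * ((if k = i then b y else 1) * (if k = j then a y else 1)))
  rw [Fintype.piFinset_univ] at h
  rw [Finset.sum_congr rfl (fun ys _ => key ys), ← h]
  split_ifs with hij
  · subst hij
    rw [Finset.prod_eq_single i]
    · simp
    · intro k _ hk
      simp [hk, hp]
    · simp
  · apply Finset.prod_eq_zero (Finset.mem_univ j)
    have : j ≠ i := fun h => hij h.symm
    simp [this, ha]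

/-- For a parameterized policy `π` (positive, summing to one,
differentiable at `θ₀`), a strictly positive reference pmf `π_ref`, and `N ≥ 1`, the
expectation over `N` i.i.d. samples `(y₁, …, y_N) ~ π θ₀` (a sum over tuples in `Y^N`
weighted by `∏_j π θ₀ y_j`) of the group-based regularizer gradient
`∑_{j=1}^N D_θ(log π θ y_j)|_{θ₀} · (1/N) ∑_{i=1}^N log(π θ₀ y_i / π_ref y_i)`
equals the exact reverse KL gradient
`D_θ(∑_{y∈Y} π θ y · log(π θ y / π_ref y))|_{θ₀}`. -/
theorem group_regularizer_gradient_eq_kl_gradient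
    {Y : Type*} [Fintype Y] [Nonempty Y] (d N : ℕ) (hN : 1 ≤ N)
    (π : (Fin d → ℝ) → Y → ℝ) (θ₀ : Fin d → ℝ)
    (hπpos : ∀ θ y, 0 < π θ y) (hπsum : ∀ θ, ∑ y, π θ y = 1)
    (hπdiff : ∀ y, DifferentiableAt ℝ (fun θ => π θ y) θ₀)
    (πref : Y → ℝ) (hrefpos : ∀ y, 0 < πref y) (hrefsum : ∑ y, πref y = 1) :
    ∑ ys : Fin N → Y, (∏ j, π θ₀ (ys j)) •
        (((1 / (N : ℝ)) * ∑ i, Real.log (π θ₀ (ys i) / πref (ys i))) •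
          ∑ j, fderiv ℝ (fun θ => Real.log (π θ (ys j))) θ₀)
      = fderiv ℝ (fun θ => ∑ y, π θ y * Real.log (π θ y / πref y)) θ₀ := by
  have hlog : ∀ y, fderiv ℝ (fun θ => Real.log (π θ y)) θ₀
      = (π θ₀ y)⁻¹ • fderiv ℝ (fun θ => π θ y) θ₀ := fun y =>
    ((hπdiff y).hasFDerivAt.log (hπpos θ₀ y).ne').fderiv
  have hsum0 : ∑ y, fderiv ℝ (fun θ => π θ y) θ₀ = 0 := by
    have h1 : HasFDerivAt (fun θ => ∑ y, π θ y) (∑ y, fderiv ℝ (fun θ => π θ y) θ₀) θ₀ :=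
      HasFDerivAt.fun_sum (fun y _ => (hπdiff y).hasFDerivAt)
    have h2 : (fun θ => ∑ y, π θ y) = fun _ => (1 : ℝ) := funext hπsum
    rw [h2] at h1
    exact h1.unique (hasFDerivAt_const 1 θ₀)
  have hkl : HasFDerivAt (fun θ => ∑ y, π θ y * Real.log (π θ y / πref y))
      (∑ y, (π θ₀ y • ((π θ₀ y)⁻¹ • fderiv ℝ (fun θ => π θ y) θ₀)
        + Real.log (π θ₀ y / πref y) • fderiv ℝ (fun θ => π θ y) θ₀)) θ₀ := by
    apply HasFDerivAt.fun_sum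
    intro y _
    have hd := (hπdiff y).hasFDerivAt
    have hl : HasFDerivAt (fun θ => Real.log (π θ y / πref y))
        ((π θ₀ y)⁻¹ • fderiv ℝ (fun θ => π θ y) θ₀) θ₀ := by
      have he : (fun θ => Real.log (π θ y / πref y))
          = fun θ => Real.log (π θ y) - Real.log (πref y) :=
        funext fun θ => Real.log_div (hπpos θ y).ne' (hrefpos y).ne'
      rw [he]
      exact (hd.log (hπpos θ₀ y).ne').sub_const _
    exact hd.mul hl
  rw [hkl.fderiv]
  have hc : ∀ y, π θ₀ y • ((π θ₀ y)⁻¹ • fderiv ℝ (fun θ => π θ y) θ₀)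
      = fderiv ℝ (fun θ => π θ y) θ₀ := fun y => smul_inv_smul₀ (hπpos θ₀ y).ne' _
  simp only [hc, hlog, Finset.sum_add_distrib, hsum0, zero_add]
  refine ContinuousLinearMap.ext fun v => ?_
  have hs : ∑ y, fderiv ℝ (fun θ => π θ y) θ₀ v = 0 := by
    have := congrArg (fun L => L v) hsum0
    simpa using this
  simp only [ContinuousLinearMap.sum_apply, ContinuousLinearMap.smul_apply, smul_eq_mul]
  set D : Y → ℝ := fun y => fderiv ℝ (fun θ => π θ y) θ₀ v with hD
  have hcD : ∀ y, π θ₀ y * ((π θ₀ y)⁻¹ * D y) = D y := fun y =>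
    mul_inv_cancel_left₀ (hπpos θ₀ y).ne' _
  have hpair := iid_pair_expectation N (π θ₀) (fun y => (π θ₀ y)⁻¹ * D y)
    (fun y => Real.log (π θ₀ y / πref y)) (hπsum θ₀) (by simp only [hcD]; exact hs)
  have hN0 : (N : ℝ) ≠ 0 := by positivity
  calc _ = (1 / (N : ℝ)) * ∑ i : Fin N, ∑ j : Fin N, ∑ ys : Fin N → Y, (∏ k, π θ₀ (ys k)) *
          (Real.log (π θ₀ (ys i) / πref (ys i)) * ((π θ₀ (ys j))⁻¹ * D (ys j))) := by
        have hsw : ∀ i : Fin N, ∑ j : Fin N, ∑ ys : Fin N → Y, (∏ k, π θ₀ (ys k)) *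
          (Real.log (π θ₀ (ys i) / πref (ys i)) * ((π θ₀ (ys j))⁻¹ * D (ys j)))
          = ∑ ys : Fin N → Y, ∑ j : Fin N, (∏ k, π θ₀ (ys k)) *
          (Real.log (π θ₀ (ys i) / πref (ys i)) * ((π θ₀ (ys j))⁻¹ * D (ys j))) :=
          fun i => Finset.sum_comm
        simp only [hsw]
        rw [Finset.sum_comm, Finset.mul_sum]
        refine Finset.sum_congr rfl fun ys _ => ?_
        simp only [← Finset.mul_sum]
        rw [← Finset.sum_mul]
        ring
    _ = ∑ y, π θ₀ y * (Real.log (π θ₀ y / πref y) * ((π θ₀ y)⁻¹ * D y)) := by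
        simp only [hpair]
        simp [hN0]
    _ = _ := by
        refine Finset.sum_congr rfl fun y _ => ?_
        rw [mul_left_comm, hcD]
end
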